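/- The group GL₃(V) acts transitively on each of the following families: (i) flags of 𝒢(V) (incident point-line pairs); (ii) triples (P₁,L₁,P₂) where P₁,P₂ are non-neighboring points incident with the line L₁; (iii) quadruples (P₁,L₁,P₂,L₂) where P₁,P₂ are non-neighboring points incident with L₁ and L₁,L₂ are non-neighboring lines through P₂; (iv) proper ordered triangles. -/

import Mathlib

/-! Context: `K` a field, `V` a commutative, associative, unital 2-dimensional `K`-algebra in
which every element is a product of two elements; `V₀ = K·r ∪ K·s` is the set of non-units.
Points and lines of the geometry `𝒢(V)` are represented by triples in `V × V × V` with
trivial annihilator, up to multiplication by a unit. -/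

/-- The triple `p` has trivial annihilator (so `V*p` is a point/line of `𝒢(V)`). -/
def TrivAnn {V : Type} [CommRing V] (p : V × V × V) : Prop :=
  ∀ v : V, v * p.1 = 0 → v * p.2.1 = 0 → v * p.2.2 = 0 → v = 0

/-- The point (represented by) `p` is incident with the line (represented by) `L`. -/
def Incid {V : Type} [CommRing V] (p L : V × V × V) : Prop :=
  L.1 * p.1 + L.2.1 * p.2.1 + L.2.2 * p.2.2 = 0

/-- Two points (or two lines) are neighboring. -/
def Nbr {V : Type} [CommRing V] (p q : V × V × V) : Prop :=
  ∃ k l : V, (k, l) ≠ ((0 : V), (0 : V)) ∧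
    (k * p.1, k * p.2.1, k * p.2.2) = (l * q.1, l * q.2.1, l * q.2.2)

/-- The point `p` and the line `L` are neighboring. -/
def NbrPL {V : Type} [CommRing V] (p L : V × V × V) : Prop :=
  ¬ IsUnit (L.1 * p.1 + L.2.1 * p.2.1 + L.2.2 * p.2.2)

/-- `p` and `q` represent the same point (resp. line) of `𝒢(V)`. -/
def SameCls {V : Type} [CommRing V] (p q : V × V × V) : Prop :=
  ∃ u : V, IsUnit u ∧ (u * p.1, u * p.2.1, u * p.2.2) = q

/-- The standing hypotheses on the algebra `V` over `K`: it is `2`-dimensional, every element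
is a product of two elements, and the set of non-units is `K·r ∪ K·s`. -/
def GoodAlg (K : Type) [Field K] (V : Type) [CommRing V] [Algebra K V] (r s : V) : Prop :=
  Module.finrank K V = 2 ∧ (∀ v : V, ∃ a b : V, v = a * b) ∧
    (∀ v : V, ¬ IsUnit v ↔ ((∃ k : K, v = k • r) ∨ (∃ k : K, v = k • s)))

/-- A proper ordered triangle: three pairwise non-neighboring points such that the three
(unique) joining lines are pairwise non-neighboring. -/
def ProperTri {V : Type} [CommRing V] (P₁ P₂ P₃ : V × V × V) : Prop :=
  ¬ Nbr P₁ P₂ ∧ ¬ Nbr P₂ P₃ ∧ ¬ Nbr P₃ P₁ ∧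
  ∃ L₁₂ L₂₃ L₃₁ : V × V × V,
    TrivAnn L₁₂ ∧ TrivAnn L₂₃ ∧ TrivAnn L₃₁ ∧
    Incid P₁ L₁₂ ∧ Incid P₂ L₁₂ ∧ Incid P₂ L₂₃ ∧ Incid P₃ L₂₃ ∧
    Incid P₃ L₃₁ ∧ Incid P₁ L₃₁ ∧
    ¬ Nbr L₁₂ L₂₃ ∧ ¬ Nbr L₂₃ L₃₁ ∧ ¬ Nbr L₃₁ L₁₂

/-- The action of a 3×3 matrix on (representatives of) points: row vector times matrix. -/
def actP {V : Type} [CommRing V] (M : Matrix (Fin 3) (Fin 3) V) (p : V × V × V) : V × V × V :=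
  (Matrix.vecMul ![p.1, p.2.1, p.2.2] M 0,
   Matrix.vecMul ![p.1, p.2.1, p.2.2] M 1,
   Matrix.vecMul ![p.1, p.2.1, p.2.2] M 2)

/-- The corresponding action on (representatives of) lines: `(a,b,c) ↦ (a,b,c)·(M⁻¹)ᵗ`. -/
noncomputable def actL {V : Type} [CommRing V] (M : Matrix (Fin 3) (Fin 3) V) (L : V × V × V) : V × V × V :=
  actP (M⁻¹).transpose L

/-! In Krull dimension zero, in particular in a finite-dimensional algebra over a field, a finite
family with trivial annihilator generates the unit ideal. Hence the coordinates of points and lines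
are unimodular, and so is the cross product of two non-neighboring ones. Over any commutative ring,
cross products then turn each of the four configurations into an invertible matrix whose rows are
vertices, and whose sides are lines, of the configuration. If `A` and `B` arise in this way from two
configurations of the same kind, `A⁻¹ * B` maps the first to the second. -/

open scoped Matrix

section Unimodular

variable {R ι : Type*} [CommRing R] [Fintype ι]

/-- A vector is unimodular if its entries generate the unit ideal. -/
def Unimodular (v : ι → R) : Prop :=
  ∃ a : ι → R, a ⬝ᵥ v = 1

theorem Unimodular.isUnit_of_eq_smul {v w : ι → R} {c : R} (hv : Unimodular v) (h : v = c • w) :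
    IsUnit c := by
  obtain ⟨a, ha⟩ := hv
  refine .of_mul_eq_one (a ⬝ᵥ w) ?_
  rw [← ha, h, dotProduct_smul, smul_eq_mul]

theorem exists_mul_pow_eq_zero_of_mem_minimalPrime {p : Ideal R} (hp : p ∈ minimalPrimes R) {y : R}
    (hy : y ∈ p) : ∃ n : ℕ, ∃ t ∉ p, t * y ^ n = 0 := by
  have hprime : p.IsPrime := hp.isPrime
  have := Ring.KrullDimLE.of_isLocalization p hp (Localization.AtPrime p)
  have hnil : IsNilpotent (algebraMap R (Localization.AtPrime p) y) :=
    Ring.KrullDimLE.isNilpotent_iff_mem_maximalIdeal.2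
      ((IsLocalization.AtPrime.to_map_mem_maximal_iff _ p y).2 hy)
  obtain ⟨n, hn⟩ := hnil
  rw [← map_pow, IsLocalization.map_eq_zero_iff p.primeCompl] at hn
  obtain ⟨t, ht⟩ := hn
  exact ⟨n, t, t.2, ht⟩

theorem exists_mul_eq_zero_of_subset_minimalPrime {p : Ideal R} (hp : p ∈ minimalPrimes R)
    (s : Finset R) (hs : (s : Set R) ⊆ p) :
    ∃ a : R, (∀ t ∉ p, t * a ≠ 0) ∧ ∀ x ∈ s, a * x = 0 := by
  classical
  have hprime : p.IsPrime := hp.isPrime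
  induction s using Finset.induction_on with
  | empty => exact ⟨1, fun t ht h => ht (by simpa [← h] using p.zero_mem), by simp⟩
  | insert y s _ ih =>
    rw [Finset.coe_insert, Set.insert_subset_iff] at hs
    obtain ⟨a, ha, has⟩ := ih hs.2
    -- Minimality of the exponent keeps `t * y ^ m * a` nonzero in the localization at `p`.
    have hex : ∃ n, ∃ t ∉ p, t * y ^ n * a = 0 := by
      obtain ⟨n, t, ht, htn⟩ := exists_mul_pow_eq_zero_of_mem_minimalPrime hp hs.1
      exact ⟨n, t, ht, by rw [htn, zero_mul]⟩
    obtain ⟨t, ht, hta⟩ := Nat.find_spec hex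
    have hpos : Nat.find hex ≠ 0 := fun h => ha t ht (by simpa [h] using hta)
    obtain ⟨m, hm⟩ := Nat.exists_eq_succ_of_ne_zero hpos
    refine ⟨t * y ^ m * a, fun t' ht' h => ?_, ?_⟩
    · exact Nat.find_min hex (hm ▸ m.lt_succ_self)
        ⟨t' * t, hprime.mul_notMem ht' ht, by rw [← h]; ring⟩
    · rw [Finset.forall_mem_insert]
      refine ⟨?_, fun x hx => by rw [mul_assoc, has x hx, mul_zero]⟩
      rw [hm, Nat.succ_eq_add_one, pow_succ] at hta
      rw [← hta]
      ring

theorem unimodular_of_forall_smul_eq_zero [Ring.KrullDimLE 0 R] {v : ι → R}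
    (hv : ∀ k : R, k • v = 0 → k = 0) : Unimodular v := by
  classical
  by_contra hnot
  have hne : Ideal.span (Set.range v) ≠ ⊤ := fun h =>
    hnot ((Ideal.mem_span_range_iff_exists_fun).1 (h ▸ Submodule.mem_top : (1 : R) ∈ _))
  obtain ⟨p, hp, hvp⟩ := Ideal.exists_le_maximal _ hne
  obtain ⟨a, ha, hav⟩ := exists_mul_eq_zero_of_subset_minimalPrime
    (Ideal.mem_minimalPrimes_of_krullDimLE_zero (I := p)) (Finset.univ.image v)
    (by simpa using Ideal.span_le.1 hvp)
  have ha0 : a = 0 := hv a (funext fun i => hav _ (by simp))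
  exact ha 1 hp.isPrime.one_notMem (by rw [ha0, mul_zero])

end Unimodular

section Side

variable {R n : Type*} [CommRing R] [Fintype n]

/-- The dual vector `L` is a side of the simplex whose vertices are the rows of `A`, namely the one
opposite to the vertex `j`. -/
def IsSide (A : Matrix n n R) (j : n) (L : n → R) : Prop :=
  Unimodular L ∧ ∀ i ≠ j, A i ⬝ᵥ L = 0

variable [DecidableEq n]

theorem IsSide.eq_smul {A : Matrix n n R} {j : n} {L : n → R} (hL : IsSide A j L)
    (hA : IsUnit A.det) : L = (A j ⬝ᵥ L) • A⁻¹ *ᵥ Pi.single j 1 := by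
  have hAL : A *ᵥ L = (A j ⬝ᵥ L) • Pi.single j 1 := by
    ext i
    obtain rfl | hij := eq_or_ne i j
    · simp [Matrix.mulVec]
    · simp [Matrix.mulVec, hL.2 i hij, hij]
  rw [← Matrix.mulVec_smul, ← hAL, Matrix.mulVec_mulVec, Matrix.nonsing_inv_mul _ hA,
    Matrix.one_mulVec]

theorem IsSide.exists_units_smul_eq {A : Matrix n n R} {j : n} {L L' : n → R} (hL : IsSide A j L)
    (hL' : IsSide A j L') (hA : IsUnit A.det) : ∃ w : Rˣ, (w : R) • L = L' := by
  obtain ⟨u, hu⟩ := hL.1.isUnit_of_eq_smul (hL.eq_smul hA)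
  obtain ⟨u', hu'⟩ := hL'.1.isUnit_of_eq_smul (hL'.eq_smul hA)
  refine ⟨u' * u⁻¹, ?_⟩
  rw [hL.eq_smul hA, hL'.eq_smul hA, ← hu, ← hu', smul_smul, Units.val_mul,
    Units.inv_mul_cancel_right]

theorem IsSide.mul_right {A M : Matrix n n R} {j : n} {L : n → R} (hL : IsSide A j L)
    (hM : IsUnit M.det) : IsSide (A * M) j (M⁻¹ *ᵥ L) := by
  have hdot : ∀ a : n → R, (a ᵥ* M) ⬝ᵥ (M⁻¹ *ᵥ L) = a ⬝ᵥ L := fun a => by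
    rw [← Matrix.dotProduct_mulVec, Matrix.mulVec_mulVec, Matrix.mul_nonsing_inv _ hM,
      Matrix.one_mulVec]
  obtain ⟨⟨a, ha⟩, hAL⟩ := hL
  exact ⟨⟨a ᵥ* M, (hdot a).trans ha⟩, fun i hi => (hdot (A i)).trans (hAL i hi)⟩

end Side

section Cross

variable {R : Type*} [CommRing R] {p q L M : Fin 3 → R}

theorem smul_eq_smul_of_smul_cross_eq_zero {a : Fin 3 → R} {k : R} (ha : a ⬝ᵥ p = 1)
    (h : k • p ⨯₃ q = 0) : (k * a ⬝ᵥ q) • p = k • q := by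
  have hcross : a ⨯₃ (k • p ⨯₃ q) = (k * a ⬝ᵥ q) • p - k • q := by
    rw [map_smul, cross_cross_eq_smul_sub_smul', dotProduct_comm p a, ha, one_smul, smul_sub,
      smul_smul]
  rw [← sub_eq_zero, ← hcross, h, map_zero]

theorem exists_cross_eq (hp : Unimodular p) (h : p ⬝ᵥ L = 0) : ∃ q, p ⨯₃ q = L := by
  obtain ⟨a, ha⟩ := hp
  refine ⟨L ⨯₃ a, ?_⟩
  rw [cross_cross_eq_smul_sub_smul', dotProduct_comm p a, ha, dotProduct_comm L p, h, one_smul,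
    zero_smul, sub_zero]

theorem exists_eq_smul_cross (hpq : Unimodular (p ⨯₃ q)) (hp : p ⬝ᵥ L = 0) (hq : q ⬝ᵥ L = 0) :
    ∃ w : R, L = w • p ⨯₃ q := by
  obtain ⟨c, hc⟩ := hpq
  have hparallel : p ⨯₃ q ⨯₃ L = 0 := by
    rw [cross_cross_eq_smul_sub_smul, hp, hq, zero_smul, zero_smul, sub_zero]
  have hexpand : c ⨯₃ (p ⨯₃ q ⨯₃ L) = (c ⬝ᵥ L) • p ⨯₃ q - L := by
    rw [cross_cross_eq_smul_sub_smul', dotProduct_comm _ c, hc, one_smul]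
  refine ⟨c ⬝ᵥ L, (sub_eq_zero.1 ?_).symm⟩
  rw [← hexpand, hparallel, map_zero]

theorem isUnit_dotProduct_of_unimodular_cross (hpq : Unimodular (p ⨯₃ q))
    (hLM : Unimodular (L ⨯₃ M)) (hpL : p ⬝ᵥ L = 0) (hqL : q ⬝ᵥ L = 0) (hqM : q ⬝ᵥ M = 0) :
    IsUnit (p ⬝ᵥ M) := by
  obtain ⟨w, rfl⟩ := exists_eq_smul_cross hpq hpL hqL
  refine hLM.isUnit_of_eq_smul (w := w • q) ?_
  rw [map_smul, LinearMap.smul_apply, cross_cross_eq_smul_sub_smul, hqM, zero_smul, sub_zero,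
    smul_comm]

theorem isSide_two {r : Fin 3 → R} (hL : Unimodular L) (hp : p ⬝ᵥ L = 0) (hq : q ⬝ᵥ L = 0) :
    IsSide ![p, q, r] 2 L :=
  ⟨hL, by simp [Fin.forall_fin_succ, hp, hq]⟩

theorem isSide_zero {r : Fin 3 → R} (hL : Unimodular L) (hq : q ⬝ᵥ L = 0) (hr : r ⬝ᵥ L = 0) :
    IsSide ![p, q, r] 0 L :=
  ⟨hL, by simp [Fin.forall_fin_succ, hq, hr]⟩

theorem exists_matrix_of_points (hpq : Unimodular (p ⨯₃ q)) (hL : Unimodular L)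
    (hpL : p ⬝ᵥ L = 0) (hqL : q ⬝ᵥ L = 0) :
    ∃ A : Matrix (Fin 3) (Fin 3) R, IsUnit A.det ∧ A 0 = p ∧ A 1 = q ∧ IsSide A 2 L := by
  obtain ⟨c, hc⟩ := hpq
  refine ⟨![p, q, c], ?_, rfl, rfl, isSide_two hL hpL hqL⟩
  rw [← triple_product_eq_det, ← triple_product_permutation, hc]
  exact isUnit_one

theorem exists_matrix_of_flag (hp : Unimodular p) (hL : Unimodular L) (hpL : p ⬝ᵥ L = 0) :
    ∃ A : Matrix (Fin 3) (Fin 3) R, IsUnit A.det ∧ A 0 = p ∧ IsSide A 2 L := by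
  obtain ⟨q, rfl⟩ := exists_cross_eq hp hpL
  obtain ⟨A, hA, hA₀, -, hside⟩ := exists_matrix_of_points hL hL hpL (dot_cross_self p q)
  exact ⟨A, hA, hA₀, hside⟩

theorem exists_matrix_of_points_lines (hpq : Unimodular (p ⨯₃ q)) (hLM : Unimodular (L ⨯₃ M))
    (hq : Unimodular q) (hL : Unimodular L) (hM : Unimodular M)
    (hpL : p ⬝ᵥ L = 0) (hqL : q ⬝ᵥ L = 0) (hqM : q ⬝ᵥ M = 0) :
    ∃ A : Matrix (Fin 3) (Fin 3) R,
      IsUnit A.det ∧ A 0 = p ∧ A 1 = q ∧ IsSide A 2 L ∧ IsSide A 0 M := by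
  have hpM : IsUnit (p ⬝ᵥ M) := isUnit_dotProduct_of_unimodular_cross hpq hLM hpL hqL hqM
  obtain ⟨r, rfl⟩ := exists_cross_eq hq hqM
  refine ⟨![p, q, r], ?_, rfl, rfl, isSide_two hL hpL hqL,
    isSide_zero hM hqM (dot_cross_self q r)⟩
  rwa [← triple_product_eq_det]

theorem isUnit_det_of_unimodular_cross {r : Fin 3 → R} (hpq : Unimodular (p ⨯₃ q))
    (hqr : Unimodular (q ⨯₃ r)) (hLM : Unimodular (L ⨯₃ M)) (hpL : p ⬝ᵥ L = 0)
    (hqL : q ⬝ᵥ L = 0) (hqM : q ⬝ᵥ M = 0) (hrM : r ⬝ᵥ M = 0) :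
    IsUnit (Matrix.det ![p, q, r]) := by
  have hpM : IsUnit (p ⬝ᵥ M) := isUnit_dotProduct_of_unimodular_cross hpq hLM hpL hqL hqM
  obtain ⟨w, rfl⟩ := exists_eq_smul_cross hqr hqM hrM
  rw [dotProduct_smul, smul_eq_mul, triple_product_eq_det] at hpM
  exact isUnit_of_mul_isUnit_right hpM

end Cross

section Geometry

variable {V : Type} {p q L : V × V × V}

/-- The triple `p` as a row vector, on which matrices and the cross product act. -/
def coords (p : V × V × V) : Fin 3 → V :=
  ![p.1, p.2.1, p.2.2]

theorem coords_injective : Function.Injective (coords (V := V)) := fun _ _ h =>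
  Prod.ext (congrFun h 0) (Prod.ext (congrFun h 1) (congrFun h 2))

variable [CommRing V]

theorem coords_smul (k : V) (p : V × V × V) : coords (k • p) = k • coords p := by
  simp [coords]

theorem coords_actP (M : Matrix (Fin 3) (Fin 3) V) (p : V × V × V) :
    coords (actP M p) = coords p ᵥ* M := by
  ext i
  fin_cases i <;> rfl

theorem coords_actL (M : Matrix (Fin 3) (Fin 3) V) (L : V × V × V) :
    coords (actL M L) = M⁻¹ *ᵥ coords L := by
  rw [actL, coords_actP, Matrix.vecMul_transpose]

theorem Incid.dotProduct_eq_zero (h : Incid p L) : coords p ⬝ᵥ coords L = 0 := by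
  rw [← h, dotProduct_comm, coords, coords, Matrix.vec3_dotProduct]
  rfl

theorem sameCls_of_smul_coords_eq (w : Vˣ) (h : (w : V) • coords p = coords q) : SameCls p q :=
  ⟨w, w.isUnit, coords_injective ((coords_smul (w : V) p).trans h)⟩

theorem TrivAnn.unimodular [Ring.KrullDimLE 0 V] (hp : TrivAnn p) : Unimodular (coords p) :=
  unimodular_of_forall_smul_eq_zero fun k hk =>
    hp k (congrFun hk 0) (congrFun hk 1) (congrFun hk 2)

theorem TrivAnn.unimodular_cross [Ring.KrullDimLE 0 V] (hp : TrivAnn p) (hpq : ¬ Nbr p q) :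
    Unimodular (coords p ⨯₃ coords q) := by
  obtain ⟨a, ha⟩ := hp.unimodular
  refine unimodular_of_forall_smul_eq_zero fun k hk => by_contra fun hk0 => hpq ?_
  refine ⟨k * a ⬝ᵥ coords q, k, fun h => hk0 (congrArg Prod.snd h), coords_injective ?_⟩
  change coords ((k * a ⬝ᵥ coords q) • p) = coords (k • q)
  rw [coords_smul, coords_smul]
  exact smul_eq_smul_of_smul_cross_eq_zero ha hk

theorem ProperTri.isUnit_det [Ring.KrullDimLE 0 V] {P₁ P₂ P₃ : V × V × V}
    (hP₁ : TrivAnn P₁) (hP₂ : TrivAnn P₂) (h : ProperTri P₁ P₂ P₃) :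
    IsUnit (Matrix.det ![coords P₁, coords P₂, coords P₃]) := by
  obtain ⟨h₁₂, h₂₃, -, L₁₂, L₂₃, -, hL₁₂, -, -, i₁, i₂, j₂, j₃, -, -, hL, -, -⟩ := h
  exact isUnit_det_of_unimodular_cross (hP₁.unimodular_cross h₁₂) (hP₂.unimodular_cross h₂₃)
    (hL₁₂.unimodular_cross hL) i₁.dotProduct_eq_zero i₂.dotProduct_eq_zero
    j₂.dotProduct_eq_zero j₃.dotProduct_eq_zero

theorem exists_actP_actL {A B : Matrix (Fin 3) (Fin 3) V} (hA : IsUnit A.det)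
    (hB : IsUnit B.det) :
    ∃ M : Matrix (Fin 3) (Fin 3) V, IsUnit M.det ∧
      (∀ {i p p'}, A i = coords p → B i = coords p' → SameCls (actP M p) p') ∧
      (∀ {j L L'}, IsSide A j (coords L) → IsSide B j (coords L') → SameCls (actL M L) L') := by
  have hAB : A * (A⁻¹ * B) = B := Matrix.mul_nonsing_inv_cancel_left A B hA
  have hM : IsUnit (A⁻¹ * B).det := by
    rw [Matrix.det_mul]
    exact (Matrix.isUnit_nonsing_inv_det A hA).mul hB
  refine ⟨A⁻¹ * B, hM, fun {i p p'} hp hp' => ?_, fun {j L L'} hL hL' => ?_⟩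
  · refine sameCls_of_smul_coords_eq 1 ?_
    rw [Units.val_one, one_smul, coords_actP, ← hp, ← hp', ← Matrix.mul_apply_eq_vecMul, hAB]
  · have hside : IsSide B j (coords (actL (A⁻¹ * B) L)) := by
      simpa only [hAB, coords_actL] using hL.mul_right hM
    obtain ⟨w, hw⟩ := hside.exists_units_smul_eq hL' hB
    exact sameCls_of_smul_coords_eq w hw

end Geometry

theorem stmt14_general (V : Type) [CommRing V] [Ring.KrullDimLE 0 V] :
    (∀ P₁ L₁ P₁' L₁' : V × V × V,
      TrivAnn P₁ → TrivAnn L₁ → Incid P₁ L₁ →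
      TrivAnn P₁' → TrivAnn L₁' → Incid P₁' L₁' →
      ∃ M : Matrix (Fin 3) (Fin 3) V, IsUnit M.det ∧
        SameCls (actP M P₁) P₁' ∧ SameCls (actL M L₁) L₁') ∧
    (∀ P₁ L₁ P₂ P₁' L₁' P₂' : V × V × V,
      TrivAnn P₁ → TrivAnn L₁ → TrivAnn P₂ → Incid P₁ L₁ → Incid P₂ L₁ → ¬ Nbr P₁ P₂ →
      TrivAnn P₁' → TrivAnn L₁' → TrivAnn P₂' → Incid P₁' L₁' → Incid P₂' L₁' →
        ¬ Nbr P₁' P₂' →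
      ∃ M : Matrix (Fin 3) (Fin 3) V, IsUnit M.det ∧
        SameCls (actP M P₁) P₁' ∧ SameCls (actL M L₁) L₁' ∧ SameCls (actP M P₂) P₂') ∧
    (∀ P₁ L₁ P₂ L₂ P₁' L₁' P₂' L₂' : V × V × V,
      TrivAnn P₁ → TrivAnn L₁ → TrivAnn P₂ → TrivAnn L₂ →
      Incid P₁ L₁ → Incid P₂ L₁ → ¬ Nbr P₁ P₂ → Incid P₂ L₂ → ¬ Nbr L₁ L₂ →
      TrivAnn P₁' → TrivAnn L₁' → TrivAnn P₂' → TrivAnn L₂' →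
      Incid P₁' L₁' → Incid P₂' L₁' → ¬ Nbr P₁' P₂' → Incid P₂' L₂' → ¬ Nbr L₁' L₂' →
      ∃ M : Matrix (Fin 3) (Fin 3) V, IsUnit M.det ∧
        SameCls (actP M P₁) P₁' ∧ SameCls (actL M L₁) L₁' ∧
        SameCls (actP M P₂) P₂' ∧ SameCls (actL M L₂) L₂') ∧
    (∀ P₁ P₂ P₃ P₁' P₂' P₃' : V × V × V,
      TrivAnn P₁ → TrivAnn P₂ → TrivAnn P₃ → ProperTri P₁ P₂ P₃ →
      TrivAnn P₁' → TrivAnn P₂' → TrivAnn P₃' → ProperTri P₁' P₂' P₃' →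
      ∃ M : Matrix (Fin 3) (Fin 3) V, IsUnit M.det ∧
        SameCls (actP M P₁) P₁' ∧ SameCls (actP M P₂) P₂' ∧ SameCls (actP M P₃) P₃') := by
  refine ⟨?_, ?_, ?_, ?_⟩
  · intro P₁ L₁ P₁' L₁' hP hL h hP' hL' h'
    obtain ⟨A, hA, hA₀, hAL⟩ :=
      exists_matrix_of_flag hP.unimodular hL.unimodular h.dotProduct_eq_zero
    obtain ⟨B, hB, hB₀, hBL⟩ :=
      exists_matrix_of_flag hP'.unimodular hL'.unimodular h'.dotProduct_eq_zero
    obtain ⟨M, hM, hpt, hln⟩ := exists_actP_actL hA hB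
    exact ⟨M, hM, hpt hA₀ hB₀, hln hAL hBL⟩
  · intro P₁ L₁ P₂ P₁' L₁' P₂' hP₁ hL _ h₁ h₂ hn hP₁' hL' _ h₁' h₂' hn'
    obtain ⟨A, hA, hA₀, hA₁, hAL⟩ := exists_matrix_of_points (hP₁.unimodular_cross hn)
      hL.unimodular h₁.dotProduct_eq_zero h₂.dotProduct_eq_zero
    obtain ⟨B, hB, hB₀, hB₁, hBL⟩ := exists_matrix_of_points (hP₁'.unimodular_cross hn')
      hL'.unimodular h₁'.dotProduct_eq_zero h₂'.dotProduct_eq_zero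
    obtain ⟨M, hM, hpt, hln⟩ := exists_actP_actL hA hB
    exact ⟨M, hM, hpt hA₀ hB₀, hln hAL hBL, hpt hA₁ hB₁⟩
  · intro P₁ L₁ P₂ L₂ P₁' L₁' P₂' L₂' hP₁ hL₁ hP₂ hL₂ h₁₁ h₂₁ hP h₂₂ hL
      hP₁' hL₁' hP₂' hL₂' h₁₁' h₂₁' hP' h₂₂' hL'
    obtain ⟨A, hA, hA₀, hA₁, hAL₁, hAL₂⟩ := exists_matrix_of_points_lines
      (hP₁.unimodular_cross hP) (hL₁.unimodular_cross hL) hP₂.unimodular hL₁.unimodular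
      hL₂.unimodular h₁₁.dotProduct_eq_zero h₂₁.dotProduct_eq_zero h₂₂.dotProduct_eq_zero
    obtain ⟨B, hB, hB₀, hB₁, hBL₁, hBL₂⟩ := exists_matrix_of_points_lines
      (hP₁'.unimodular_cross hP') (hL₁'.unimodular_cross hL') hP₂'.unimodular hL₁'.unimodular
      hL₂'.unimodular h₁₁'.dotProduct_eq_zero h₂₁'.dotProduct_eq_zero h₂₂'.dotProduct_eq_zero
    obtain ⟨M, hM, hpt, hln⟩ := exists_actP_actL hA hB
    exact ⟨M, hM, hpt hA₀ hB₀, hln hAL₁ hBL₁, hpt hA₁ hB₁, hln hAL₂ hBL₂⟩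
  · intro P₁ P₂ P₃ P₁' P₂' P₃' hP₁ hP₂ _ h hP₁' hP₂' _ h'
    obtain ⟨M, hM, hpt, -⟩ := exists_actP_actL (h.isUnit_det hP₁ hP₂) (h'.isUnit_det hP₁' hP₂')
    exact ⟨M, hM, hpt (i := 0) rfl rfl, hpt (i := 1) rfl rfl, hpt (i := 2) rfl rfl⟩

/-- `GL₃(V)` acts transitively on: (i) flags; (ii) triples `(P₁,L₁,P₂)`
with `P₁,P₂` non-neighboring points on `L₁`; (iii) quadruples `(P₁,L₁,P₂,L₂)` with
additionally `L₁,L₂` non-neighboring lines through `P₂`; (iv) proper ordered triangles. -/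
theorem stmt14 (K : Type) [Field K] (V : Type) [CommRing V] [Algebra K V] (r s : V)
    (hV : GoodAlg K V r s) :
    (∀ P₁ L₁ P₁' L₁' : V × V × V,
      TrivAnn P₁ → TrivAnn L₁ → Incid P₁ L₁ →
      TrivAnn P₁' → TrivAnn L₁' → Incid P₁' L₁' →
      ∃ M : Matrix (Fin 3) (Fin 3) V, IsUnit M.det ∧
        SameCls (actP M P₁) P₁' ∧ SameCls (actL M L₁) L₁') ∧
    (∀ P₁ L₁ P₂ P₁' L₁' P₂' : V × V × V,
      TrivAnn P₁ → TrivAnn L₁ → TrivAnn P₂ → Incid P₁ L₁ → Incid P₂ L₁ → ¬ Nbr P₁ P₂ →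
      TrivAnn P₁' → TrivAnn L₁' → TrivAnn P₂' → Incid P₁' L₁' → Incid P₂' L₁' →
        ¬ Nbr P₁' P₂' →
      ∃ M : Matrix (Fin 3) (Fin 3) V, IsUnit M.det ∧
        SameCls (actP M P₁) P₁' ∧ SameCls (actL M L₁) L₁' ∧ SameCls (actP M P₂) P₂') ∧
    (∀ P₁ L₁ P₂ L₂ P₁' L₁' P₂' L₂' : V × V × V,
      TrivAnn P₁ → TrivAnn L₁ → TrivAnn P₂ → TrivAnn L₂ →
      Incid P₁ L₁ → Incid P₂ L₁ → ¬ Nbr P₁ P₂ → Incid P₂ L₂ → ¬ Nbr L₁ L₂ →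
      TrivAnn P₁' → TrivAnn L₁' → TrivAnn P₂' → TrivAnn L₂' →
      Incid P₁' L₁' → Incid P₂' L₁' → ¬ Nbr P₁' P₂' → Incid P₂' L₂' → ¬ Nbr L₁' L₂' →
      ∃ M : Matrix (Fin 3) (Fin 3) V, IsUnit M.det ∧
        SameCls (actP M P₁) P₁' ∧ SameCls (actL M L₁) L₁' ∧
        SameCls (actP M P₂) P₂' ∧ SameCls (actL M L₂) L₂') ∧
    (∀ P₁ P₂ P₃ P₁' P₂' P₃' : V × V × V,
      TrivAnn P₁ → TrivAnn P₂ → TrivAnn P₃ → ProperTri P₁ P₂ P₃ →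
      TrivAnn P₁' → TrivAnn P₂' → TrivAnn P₃' → ProperTri P₁' P₂' P₃' →
      ∃ M : Matrix (Fin 3) (Fin 3) V, IsUnit M.det ∧
        SameCls (actP M P₁) P₁' ∧ SameCls (actP M P₂) P₂' ∧ SameCls (actP M P₃) P₃') := by
  have : FiniteDimensional K V := .of_finrank_eq_succ hV.1
  have : IsArtinianRing V := .of_finite K V
  exact stmt14_general V
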